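/- If x is a uniformly distributed random variable in [0,1)^{2N−1} (Lebesgue measure), then S(x) is uniformly distributed on S^{2N−1}; that is, the pushforward of Lebesgue measure on [0,1)^{2N−1} under Sibuya's map S is the normalized uniform (surface) measure on S^{2N−1}. -/

import Mathlib

/-!
By Box–Muller, a standard Gaussian vector of `ℝ^(2N)` consists of `N` independent planar vectors
`√(2 Eᵢ) (cos 2πUᵢ, sin 2πUᵢ)` with `Eᵢ` exponential and `Uᵢ` uniform on `[0, 1)`, all independent
(`map_boxMuller`). Its squared norm is `2 ∑ Eᵢ`, so radial normalization replaces `2 Eᵢ` by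
`Eᵢ / ∑ Eⱼ` and keeps the angles (`uniformSphere_eq`). Sibuya's map has the same shape, with the
spacings of `N - 1` sorted uniforms in place of `Eᵢ / ∑ Eⱼ` (`sibuya_eq`). Hence it suffices that
these two random vectors have the same law (`map_normalize_eq_map_spacings`).

Both laws are multiples of the image of Lebesgue measure on the simplex `0 < v₁ < ⋯ < v_{N-1} < 1`
under the spacings map. For sorted uniforms this follows by cutting the cube into `(N-1)!` permuted
copies of the simplex (`map_sort_unif`); for the exponentials it follows by passing to partial sums
`y` and rescaling `y₁, …, y_{N-1}` by `y_N` (`map_normalize_exp`). Two proportional probability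
measures are equal, so neither the Jacobian determinant nor the Gamma integral is needed.
-/

open MeasureTheory ProbabilityTheory

noncomputable section

/-- Cumulative order statistics for Sibuya's map: `ys x 0 = 0`, `ys x N = 1`, and for
`1 ≤ k ≤ N−1`, `ys x k` is the `k`-th smallest among the last `N−1` coordinates of `x`. -/
def sibuyaYs (N : ℕ) (x : Fin (2 * N - 1) → ℝ) (k : ℕ) : ℝ :=
  if k = 0 then 0
  else if N ≤ k then 1
  else
    let tail : Fin (N - 1) → ℝ := fun i =>
      if h : N + i.val < 2 * N - 1 then x ⟨N + i.val, h⟩ else 0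
    if h : k - 1 < N - 1 then tail (Tuple.sort tail ⟨k - 1, h⟩) else 1

/-- Sibuya's map `S : [0,1)^(2N−1) → S^(2N−1)`:
`S(x)_{2i−1} = √(y_i − y_{i−1}) cos(2π x_i)`, `S(x)_{2i} = √(y_i − y_{i−1}) sin(2π x_i)`. -/
def sibuya (N : ℕ) (x : Fin (2 * N - 1) → ℝ) : Fin (2 * N) → ℝ := fun j =>
  let i := j.val / 2
  let ang := if h : i < 2 * N - 1 then 2 * Real.pi * x ⟨i, h⟩ else 0
  Real.sqrt (sibuyaYs N x (i + 1) - sibuyaYs N x i) *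
    (if j.val % 2 = 0 then Real.cos ang else Real.sin ang)

/-- The uniform probability measure on the unit sphere `S^(2N−1) ⊂ ℝ^(2N)`, realized as the
pushforward of the standard Gaussian under radial normalization. -/
def uniformSphere (N : ℕ) : Measure (Fin (2 * N) → ℝ) :=
  Measure.map (fun x => (Real.sqrt (∑ i, x i ^ 2))⁻¹ • x)
    (Measure.pi fun _ => gaussianReal 0 1)

open scoped ENNReal

/-! ### Box–Muller -/

/-- Density of the exponential law of rate `1`, supported on `(0, ∞)`. -/
def expDensity (e : ℝ) : ℝ≥0∞ :=
  (Set.Ioi (0 : ℝ)).indicator (fun e => ENNReal.ofReal (Real.exp (-e))) e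

/-- The exponential law of rate `1`. That its total mass is `1` is read off from
`map_boxMuller`. -/
def expLaw : Measure ℝ := volume.withDensity expDensity

/-- The uniform law on `[0, 1)`. -/
def unifLaw : Measure ℝ := volume.restrict (Set.Ico (0 : ℝ) 1)

/-- The Box–Muller map `(e, u) ↦ √(2e) (cos 2πu, sin 2πu)`. -/
def boxMuller (p : ℝ × ℝ) : ℝ × ℝ :=
  (Real.sqrt (2 * p.1) * Real.cos (2 * Real.pi * p.2),
    Real.sqrt (2 * p.1) * Real.sin (2 * Real.pi * p.2))

lemma measurable_expDensity : Measurable expDensity :=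
  Measurable.indicator (by fun_prop) measurableSet_Ioi

instance : SFinite expLaw := by unfold expLaw; infer_instance

instance : IsProbabilityMeasure unifLaw := ⟨by simp [unifLaw]⟩

lemma measurable_boxMuller : Measurable boxMuller := by
  unfold boxMuller; fun_prop

/-- The polar angle, which ranges over `(-π, π)`, is replaced by `2πu` with `u ∈ [0, 1)`; this is
periodicity followed by a rescaling. -/
lemma lintegral_angle (g : ℝ → ℝ≥0∞) (hg : Function.Periodic g (2 * Real.pi)) (hm : Measurable g) :
    ∫⁻ θ in Set.Ioo (-Real.pi) Real.pi, g θ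
      = ENNReal.ofReal (2 * Real.pi) * ∫⁻ u in Set.Ico (0 : ℝ) 1, g (2 * Real.pi * u) := by
  have hpos : 0 < 2 * Real.pi := Real.two_pi_pos
  have h1 : ∫⁻ θ in Set.Ioo (-Real.pi) Real.pi, g θ
      = ∫⁻ θ in Set.Ioc 0 (2 * Real.pi), g θ := by
    rw [setLIntegral_congr Ioo_ae_eq_Ioc]
    have a1 := isAddFundamentalDomain_Ioc hpos (-Real.pi)
    have a2 := isAddFundamentalDomain_Ioc hpos 0
    rw [show -Real.pi + 2 * Real.pi = Real.pi by ring] at a1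
    rw [zero_add] at a2
    refine a1.setLIntegral_eq a2 g fun z x => ?_
    obtain ⟨z, n, rfl⟩ := z
    have := hg.zsmul n x
    simpa [AddSubgroup.vadd_def, add_comm] using this
  have him : (fun u : ℝ => 2 * Real.pi * u) '' Set.Ioc 0 1 = Set.Ioc 0 (2 * Real.pi) := by
    rw [Set.image_mul_left_Ioc hpos]; simp
  rw [h1, ← him, lintegral_image_eq_lintegral_abs_deriv_mul (f' := fun _ => 2 * Real.pi)
    measurableSet_Ioc
    (fun x _ => by simpa using ((hasDerivAt_id x).const_mul (2 * Real.pi)).hasDerivWithinAt)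
    (fun x _ y _ h => by simpa [hpos.ne'] using h), lintegral_const_mul _ (by fun_prop),
    abs_of_pos hpos, setLIntegral_congr Ico_ae_eq_Ioc]

/-- The substitution `r = √(2e)`, under which `r dr = de`. -/
lemma lintegral_radius (g : ℝ → ℝ≥0∞) :
    ∫⁻ r in Set.Ioi (0 : ℝ), ENNReal.ofReal r * g r
      = ∫⁻ e in Set.Ioi (0 : ℝ), g (Real.sqrt (2 * e)) := by
  have him : (fun e : ℝ => Real.sqrt (2 * e)) '' Set.Ioi 0 = Set.Ioi 0 := by
    ext r
    constructor
    · rintro ⟨e, he, rfl⟩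
      have : (0 : ℝ) < e := he
      simp only [Set.mem_Ioi]; positivity
    · intro hr
      have hr : (0 : ℝ) < r := hr
      refine ⟨r ^ 2 / 2, by simp only [Set.mem_Ioi]; positivity, ?_⟩
      simp only
      rw [show 2 * (r ^ 2 / 2) = r ^ 2 by ring, Real.sqrt_sq hr.le]
  conv_lhs => rw [← him]
  rw [lintegral_image_eq_lintegral_abs_deriv_mul (f' := fun e => 2 / (2 * Real.sqrt (2 * e)))
    measurableSet_Ioi]
  · refine setLIntegral_congr_fun measurableSet_Ioi fun e he => ?_
    have he : (0 : ℝ) < e := he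
    have hs : 0 < Real.sqrt (2 * e) := by positivity
    rw [← mul_assoc, ← ENNReal.ofReal_mul (abs_nonneg _), abs_of_pos (by positivity)]
    rw [show 2 / (2 * Real.sqrt (2 * e)) * Real.sqrt (2 * e) = 1 by field_simp]
    simp
  · intro x hx
    have hx : (0 : ℝ) < x := hx
    have := ((hasDerivAt_id x).const_mul (2 : ℝ)).sqrt (by simpa using hx.ne')
    simpa using this.hasDerivWithinAt
  · intro x hx y hy h
    have hx : (0 : ℝ) < x := hx
    have hy : (0 : ℝ) < y := hy
    have := (Real.sqrt_inj (by positivity) (by positivity)).1 h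
    linarith

/-- Box–Muller: a standard Gaussian pair is the image of an independent exponential–uniform pair. -/
theorem map_boxMuller :
    Measure.map boxMuller (expLaw.prod unifLaw) = (gaussianReal 0 1).prod (gaussianReal 0 1) := by
  symm
  refine Measure.ext_of_lintegral _ fun f hf => ?_
  rw [lintegral_map hf measurable_boxMuller, gaussianReal_of_var_ne_zero _ one_ne_zero,
    prod_withDensity (measurable_gaussianPDF _ _) (measurable_gaussianPDF _ _),
    lintegral_withDensity_eq_lintegral_mul _ (by fun_prop) hf, ← Measure.volume_eq_prod,
    ← lintegral_comp_polarCoord_symm, polarCoord_target, Measure.volume_eq_prod,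
    ← Measure.prod_restrict, lintegral_prod _ ?_, lintegral_prod _ (by
      have := measurable_boxMuller
      fun_prop)]
  swap
  · have : Measurable (polarCoord.symm : ℝ × ℝ → ℝ × ℝ) := by
      have : (polarCoord.symm : ℝ × ℝ → ℝ × ℝ)
        = fun p => (p.1 * Real.cos p.2, p.1 * Real.sin p.2) := by ext p <;> simp
      rw [this]; fun_prop
    simp only [smul_eq_mul, Pi.mul_apply]
    fun_prop
  -- In polar coordinates the Gaussian density depends on the radius only.
  have key : ∀ r θ : ℝ, ENNReal.ofReal r •
      ((fun z : ℝ × ℝ => gaussianPDF 0 1 z.1 * gaussianPDF 0 1 z.2) * f) (polarCoord.symm (r, θ))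
      = ENNReal.ofReal r * (ENNReal.ofReal ((2 * Real.pi)⁻¹ * Real.exp (-(r ^ 2 / 2))) *
        f (r * Real.cos θ, r * Real.sin θ)) := by
    intro r θ
    simp only [polarCoord_symm_apply, Pi.mul_apply, smul_eq_mul]
    congr 2
    rw [gaussianPDF, gaussianPDF, ← ENNReal.ofReal_mul (gaussianPDFReal_nonneg _ _ _)]
    congr 1
    simp only [gaussianPDFReal, NNReal.coe_one, mul_one, sub_zero]
    rw [mul_mul_mul_comm, ← Real.exp_add, ← mul_inv, Real.mul_self_sqrt (by positivity)]
    congr 2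
    have := Real.sin_sq_add_cos_sq θ
    linear_combination (-(r ^ 2) / 2) * this
  simp only [key]
  have hin : ∀ r : ℝ, ∫⁻ θ in Set.Ioo (-Real.pi) Real.pi,
        ENNReal.ofReal r * (ENNReal.ofReal ((2 * Real.pi)⁻¹ * Real.exp (-(r ^ 2 / 2))) *
        f (r * Real.cos θ, r * Real.sin θ))
      = ENNReal.ofReal r * (ENNReal.ofReal (Real.exp (-(r ^ 2 / 2))) *
         ∫⁻ u in Set.Ico (0 : ℝ) 1,
           f (r * Real.cos (2 * Real.pi * u), r * Real.sin (2 * Real.pi * u))) := by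
    intro r
    rw [lintegral_const_mul _ (by fun_prop), lintegral_const_mul _ (by fun_prop),
      lintegral_angle (fun θ => f (r * Real.cos θ, r * Real.sin θ)) (fun θ => by simp) (by fun_prop),
      ← mul_assoc (ENNReal.ofReal (_ * _)), ← ENNReal.ofReal_mul (by positivity)]
    congr 3
    have := Real.pi_pos
    field_simp
  simp only [hin]
  rw [lintegral_radius, expLaw,
    lintegral_withDensity_eq_lintegral_mul_non_measurable _ measurable_expDensity
    (Filter.Eventually.of_forall fun e => by
      unfold expDensity; rw [Set.indicator_apply]; split_ifs <;> simp),
    ← lintegral_indicator measurableSet_Ioi]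
  congr 1
  ext e
  simp only [Set.indicator_apply, expDensity, Pi.mul_apply]
  split_ifs with he
  · have he : (0 : ℝ) < e := he
    rw [Real.sq_sqrt (by positivity)]
    congr 3
    ring_nf
  · simp

instance : IsProbabilityMeasure expLaw := by
  have h : Measure.map boxMuller (expLaw.prod unifLaw) Set.univ = 1 := by
    rw [map_boxMuller]; exact measure_univ
  rw [Measure.map_apply measurable_boxMuller MeasurableSet.univ, Set.preimage_univ,
    ← Set.univ_prod_univ, Measure.prod_prod, measure_univ (μ := unifLaw), mul_one] at h
  exact ⟨h⟩

/-! ### Joint density of independent exponentials -/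

lemma lintegral_pi_prod {n : ℕ} (f : Fin n → ℝ → ℝ≥0∞) (hf : ∀ i, Measurable (f i)) :
    ∫⁻ x : Fin n → ℝ, ∏ i, f i (x i) = ∏ i, ∫⁻ t, f i t := by
  induction n with
  | zero => simp [volume_pi]
  | succ n ih =>
    have hmp := (volume_preserving_piFinSuccAbove (fun _ : Fin (n + 1) => ℝ) 0).symm
    rw [← hmp.lintegral_comp_emb (MeasurableEquiv.measurableEmbedding _)]
    simp only [MeasurableEquiv.piFinSuccAbove_symm_apply, Fin.prod_univ_succ, Fin.insertNthEquiv_zero,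
      Fin.consEquiv_apply, Fin.cons_zero, Fin.cons_succ]
    rw [Measure.volume_eq_prod, lintegral_prod_mul (f := f 0)
      (g := fun y : Fin n → ℝ => ∏ x, f x.succ (y x)) (hf 0).aemeasurable
      (Finset.measurable_prod _ fun i _ =>
        (hf i.succ).comp (measurable_pi_apply i)).aemeasurable, ih _ (fun i => hf _)]

lemma pi_expLaw (n : ℕ) : Measure.pi (fun _ : Fin n => expLaw)
    = (volume : Measure (Fin n → ℝ)).withDensity (fun x => ∏ i, expDensity (x i)) := by
  refine (Measure.pi_eq fun s hs => ?_)
  have := measurable_expDensity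
  rw [withDensity_apply _ (MeasurableSet.univ_pi hs), ← lintegral_indicator (MeasurableSet.univ_pi hs)]
  have h1 : ∀ x : Fin n → ℝ, (Set.univ.pi s).indicator (fun x => ∏ i, expDensity (x i)) x
      = ∏ i, (s i).indicator expDensity (x i) := by
    intro x
    by_cases hx : x ∈ Set.univ.pi s
    · rw [Set.indicator_of_mem hx]
      exact Finset.prod_congr rfl fun i _ => (Set.indicator_of_mem (hx i trivial) _).symm
    · rw [Set.indicator_of_notMem hx]
      simp only [Set.mem_univ_pi, not_forall] at hx
      obtain ⟨i, hi⟩ := hx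
      exact (Finset.prod_eq_zero (Finset.mem_univ i) (Set.indicator_of_notMem hi _)).symm
  simp only [h1]
  rw [lintegral_pi_prod _ (fun i => this.indicator (hs i))]
  refine Finset.prod_congr rfl fun i _ => ?_
  rw [lintegral_indicator (hs i), expLaw, withDensity_apply _ (hs i)]

/-! ### Consecutive differences and the order simplex -/

/-- The linear map `y ↦ (y₀, y₁ - y₀, …, yₘ - yₘ₋₁)` of consecutive differences. The `Fin.cons 0`
supplies the predecessor `0` of `y₀`. -/
def gaps (m : ℕ) : (Fin (m + 1) → ℝ) →ₗ[ℝ] (Fin (m + 1) → ℝ) where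
  toFun y i := y i - (Fin.cons 0 y : Fin (m + 2) → ℝ) i.castSucc
  map_add' y z := by
    ext i
    cases i using Fin.cases with
    | zero => simp
    | succ i => simp only [← Fin.succ_castSucc, Fin.cons_succ, Pi.add_apply]; ring
  map_smul' c y := by
    ext i
    cases i using Fin.cases with
    | zero => simp
    | succ i =>
      simp only [← Fin.succ_castSucc, Fin.cons_succ, Pi.smul_apply, smul_eq_mul, RingHom.id_apply]
      ring

lemma gaps_apply {m : ℕ} (y : Fin (m + 1) → ℝ) (i : Fin (m + 1)) :
    gaps m y i = y i - (Fin.cons 0 y : Fin (m + 2) → ℝ) i.castSucc := rfl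

lemma gaps_zero {m : ℕ} (y : Fin (m + 1) → ℝ) : gaps m y 0 = y 0 := by
  simp [gaps_apply]

lemma gaps_succ {m : ℕ} (y : Fin (m + 1) → ℝ) (i : Fin m) :
    gaps m y i.succ = y i.succ - y i.castSucc := by
  rw [gaps_apply, ← Fin.succ_castSucc, Fin.cons_succ]

lemma sum_gaps {m : ℕ} (y : Fin (m + 1) → ℝ) : ∑ i, gaps m y i = y (Fin.last m) := by
  have h1 := Fin.sum_univ_castSucc (Fin.cons 0 y : Fin (m + 2) → ℝ)
  have h2 := Fin.sum_univ_succ (Fin.cons 0 y : Fin (m + 2) → ℝ)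
  simp only [Fin.cons_succ, Fin.cons_zero, ← Fin.succ_last] at h1 h2
  simp only [gaps_apply, Finset.sum_sub_distrib]
  linarith

lemma det_gaps_ne_zero (m : ℕ) : LinearMap.det (gaps m) ≠ 0 := by
  have hinj : Function.Injective (gaps m) := by
    rw [injective_iff_map_eq_zero]
    intro y hy
    ext i
    induction i using Fin.induction with
    | zero => rw [← gaps_zero y, hy]
    | succ i ih =>
      have := gaps_succ y i
      rw [hy, ih] at this
      simpa using this.symm
  exact (LinearEquiv.isUnit_det' (LinearEquiv.ofInjectiveEndo _ hinj)).ne_zero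

/-- The open order simplex `0 < v₀ < ⋯ < vₘ₋₁ < 1`. -/
def openSimplex (m : ℕ) : Set (Fin m → ℝ) := {v | StrictMono v ∧ ∀ i, v i ∈ Set.Ioo (0 : ℝ) 1}

/-- The `m + 1` spacings cut out of `[0, 1]` by `v₀ ≤ ⋯ ≤ vₘ₋₁`, the endpoint `1` being appended. -/
def spacings {m : ℕ} (v : Fin m → ℝ) : Fin (m + 1) → ℝ := gaps m (Fin.snoc v 1)

lemma measurable_gaps (m : ℕ) : Measurable (gaps m) :=
  (LinearMap.continuous_of_finiteDimensional _).measurable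

lemma measurable_snoc (m : ℕ) :
    Measurable (fun p : ℝ × (Fin m → ℝ) => (Fin.snoc p.2 p.1 : Fin (m + 1) → ℝ)) := by
  rw [measurable_pi_iff]
  intro i
  cases i using Fin.lastCases with
  | last => simpa using measurable_fst
  | cast i => simp only [Fin.snoc_castSucc]; fun_prop

lemma measurable_spacings (m : ℕ) : Measurable (spacings (m := m)) :=
  (measurable_gaps m).comp ((measurable_snoc m).comp (by fun_prop : Measurable fun v => ((1 : ℝ), v)))

lemma measurableSet_openSimplex (m : ℕ) : MeasurableSet (openSimplex m) := by
  have : openSimplex m = (⋂ i, ⋂ j, ⋂ (_ : i < j), {v : Fin m → ℝ | v i < v j})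
      ∩ ⋂ i, (fun v : Fin m → ℝ => v i) ⁻¹' Set.Ioo (0 : ℝ) 1 := by
    ext v; simp [openSimplex, StrictMono]
  rw [this]
  refine MeasurableSet.inter ?_ ?_
  · exact MeasurableSet.iInter fun i => MeasurableSet.iInter fun j => MeasurableSet.iInter fun _ =>
      measurableSet_lt (measurable_pi_apply i) (measurable_pi_apply j)
  · exact MeasurableSet.iInter fun i => measurable_pi_apply i measurableSet_Ioo

lemma gaps_pos_iff {m : ℕ} (y : Fin (m + 1) → ℝ) :
    (∀ i, 0 < gaps m y i) ↔ StrictMono y ∧ 0 < y 0 := by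
  rw [Fin.forall_fin_succ, gaps_zero, Fin.strictMono_iff_lt_succ]
  simp only [gaps_succ, sub_pos]
  tauto

lemma mem_openSimplex_iff {m : ℕ} (v : Fin m → ℝ) :
    v ∈ openSimplex m ↔ ∀ i, 0 < spacings v i := by
  rw [spacings, gaps_pos_iff]
  constructor
  · rintro ⟨h1, h2⟩
    constructor
    · intro i j hij
      cases i using Fin.lastCases with
      | last => exact absurd hij (Fin.le_last _).not_gt
      | cast i =>
        cases j using Fin.lastCases with
        | last => simpa using (h2 i).2
        | cast j => simpa using h1 (by simpa using hij)
    · cases m with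
      | zero => simp [Fin.snoc]
      | succ m =>
        have := (h2 0).1
        rw [← Fin.castSucc_zero, Fin.snoc_castSucc]
        exact this
  · rintro ⟨h1, h2⟩
    refine ⟨fun i j hij => ?_, fun i => ⟨?_, ?_⟩⟩
    · simpa using h1 (Fin.castSucc_lt_castSucc_iff.2 hij)
    · have := h1.monotone (Fin.zero_le i.castSucc)
      rw [Fin.snoc_castSucc] at this
      linarith
    · simpa using h1 (Fin.castSucc_lt_last i)

lemma snoc_smul {m : ℕ} (t : ℝ) (v : Fin m → ℝ) :
    (Fin.snoc (t • v) t : Fin (m + 1) → ℝ) = t • (Fin.snoc v 1 : Fin (m + 1) → ℝ) := by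
  ext i
  cases i using Fin.lastCases with
  | last => simp
  | cast i => simp

/-! ### Normalized exponentials -/

lemma prod_expDensity_pos {n : ℕ} {x : Fin n → ℝ} (hx : ∀ i, 0 < x i) :
    ∏ i, expDensity (x i) = ENNReal.ofReal (Real.exp (-∑ i, x i)) := by
  have : ∀ i, expDensity (x i) = ENNReal.ofReal (Real.exp (-(x i))) := fun i =>
    Set.indicator_of_mem (hx i) _
  simp only [this]
  rw [← ENNReal.ofReal_prod_of_nonneg (fun i _ => (Real.exp_pos _).le), ← Real.exp_sum,
    Finset.sum_neg_distrib]

lemma prod_expDensity_of_nonpos {n : ℕ} {x : Fin n → ℝ} (hx : ¬ ∀ i, 0 < x i) :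
    ∏ i, expDensity (x i) = 0 := by
  push Not at hx
  obtain ⟨i, hi⟩ := hx
  exact Finset.prod_eq_zero (Finset.mem_univ i) (Set.indicator_of_notMem (by simpa using hi) _)

/-- Up to a constant, the normalized vector of iid exponentials is distributed as the spacings of
a Lebesgue point of the order simplex. Writing `x = gaps y`, the sum of the `x i` is the last
coordinate `t` of `y`; after rescaling the other coordinates by `t` the integrand splits into a
function of `t` times a function of the point of the simplex. The constant is not computed: it is
fixed later by comparing total masses. -/
lemma map_normalize_exp (m : ℕ) : ∃ c : ℝ≥0∞,
    Measure.map (fun x : Fin (m + 1) → ℝ => (∑ i, x i)⁻¹ • x) (Measure.pi fun _ => expLaw)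
      = c • Measure.map spacings (volume.restrict (openSimplex m)) := by
  classical
  have hmd := measurable_expDensity
  have hnorm : Measurable (fun x : Fin (m + 1) → ℝ => (∑ i, x i)⁻¹ • x) := by fun_prop
  have hgaps := measurable_gaps m
  have hsnoc := measurable_snoc m
  have hspac := measurable_spacings m
  set d : ℝ≥0∞ := ENNReal.ofReal |(LinearMap.det (gaps m))⁻¹| with hd
  have hmap : Measure.map (gaps m) volume = d • volume :=
    Measure.map_linearMap_addHaar_eq_smul_addHaar volume (det_gaps_ne_zero m)
  have hd0 : d ≠ 0 := by
    simp [hd, det_gaps_ne_zero m]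
  have hdt : d ≠ ∞ := ENNReal.ofReal_ne_top
  have hvol : (volume : Measure (Fin (m + 1) → ℝ)) = d⁻¹ • Measure.map (gaps m) volume := by
    rw [hmap, smul_smul, ENNReal.inv_mul_cancel hd0 hdt, one_smul]
  refine ⟨d⁻¹ * ∫⁻ t in Set.Ioi (0 : ℝ), ENNReal.ofReal (Real.exp (-t)) * ENNReal.ofReal (t ^ m), ?_⟩
  refine Measure.ext_of_lintegral _ fun f hf => ?_
  rw [lintegral_map hf hnorm, pi_expLaw, lintegral_withDensity_eq_lintegral_mul _ (by fun_prop)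
    (show Measurable fun x : Fin (m + 1) → ℝ => f ((∑ i, x i)⁻¹ • x) from hf.comp hnorm),
    lintegral_smul_measure, lintegral_map hf hspac, hvol, lintegral_smul_measure,
    lintegral_map (by simp only [Pi.mul_def]; fun_prop) hgaps, smul_eq_mul, smul_eq_mul, mul_assoc]
  congr 1
  have hmp := (volume_preserving_piFinSuccAbove (fun _ : Fin (m + 1) => ℝ) (Fin.last m)).symm
  rw [← hmp.lintegral_comp_emb (MeasurableEquiv.measurableEmbedding _)]
  have hsymm : ∀ p : ℝ × (Fin m → ℝ),
      (MeasurableEquiv.piFinSuccAbove (fun _ : Fin (m + 1) => ℝ) (Fin.last m)).symm p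
        = (Fin.snoc p.2 p.1 : Fin (m + 1) → ℝ) := by
    intro p
    simp [MeasurableEquiv.piFinSuccAbove_symm_apply, Fin.insertNthEquiv]
  simp only [hsymm]
  simp only [Pi.mul_apply, sum_gaps, Fin.snoc_last]
  rw [Measure.volume_eq_prod, lintegral_prod _ (by fun_prop), ← lintegral_mul_const _ (by fun_prop),
    ← lintegral_indicator measurableSet_Ioi]
  congr 1
  ext t
  rw [Set.indicator_apply]
  split_ifs with ht
  · have ht : (0 : ℝ) < t := ht
    -- Lebesgue measure rescaled by `t`, which lets `w = t • v` be substituted.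
    have hscale : (volume : Measure (Fin m → ℝ))
        = ENNReal.ofReal (t ^ m) • Measure.map (fun v => t • v) volume := by
      rw [Measure.map_addHaar_smul _ ht.ne', smul_smul, ← ENNReal.ofReal_mul (by positivity)]
      rw [abs_of_pos (by positivity)]
      simp [ht.ne']
    conv_lhs => rw [hscale, lintegral_smul_measure, lintegral_map (by fun_prop) (by fun_prop)]
    simp only [snoc_smul, map_smul, smul_smul, inv_mul_cancel₀ ht.ne', one_smul]
    rw [← lintegral_indicator (measurableSet_openSimplex m), smul_eq_mul,
      mul_comm (ENNReal.ofReal (Real.exp _)), mul_assoc, ← lintegral_const_mul _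
        ((show Measurable fun v => f (spacings v) from hf.comp hspac).indicator
          (measurableSet_openSimplex m))]
    congr 2
    ext v
    rw [Set.indicator_apply]
    have hiff : (∀ i, 0 < (t • gaps m (Fin.snoc v 1)) i) ↔ v ∈ openSimplex m := by
      rw [mem_openSimplex_iff]
      simp [spacings, ht]
    split_ifs with hv
    · rw [prod_expDensity_pos (hiff.2 hv)]
      simp only [Pi.smul_apply, smul_eq_mul, ← Finset.mul_sum, sum_gaps, Fin.snoc_last, mul_one]
      rfl
    · rw [prod_expDensity_of_nonpos (fun h => hv (hiff.1 h))]
      simp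
  · have : ∀ v : Fin m → ℝ, ∏ i, expDensity (gaps m (Fin.snoc v t) i) = 0 := by
      intro v
      refine prod_expDensity_of_nonpos fun h => ht ?_
      have := Finset.sum_pos (fun i _ => h i) Finset.univ_nonempty
      simpa [sum_gaps] using this
    simp [this]


/-! ### Order statistics of uniforms -/

/-- The order statistics of `v`. -/
def sortTuple {m : ℕ} (v : Fin m → ℝ) : Fin m → ℝ := v ∘ Tuple.sort v

lemma measurableSet_sort_eq {m : ℕ} (σ : Equiv.Perm (Fin m)) :
    MeasurableSet {v : Fin m → ℝ | Tuple.sort v = σ} := by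
  have : {v : Fin m → ℝ | Tuple.sort v = σ}
      = (⋂ i, ⋂ j, ⋂ (_ : i ≤ j), {v : Fin m → ℝ | v (σ i) ≤ v (σ j)}) ∩
        ⋂ i, ⋂ j, ⋂ (_ : i < j), ({v : Fin m → ℝ | v (σ i) = v (σ j)}ᶜ ∪ {_v | σ i < σ j}) := by
    ext v
    simp only [Set.mem_ofPred_eq, eq_comm (b := σ), Tuple.eq_sort_iff, Monotone, Set.mem_inter_iff,
      Set.mem_iInter, Function.comp_apply, Set.mem_union, Set.mem_compl_iff, imp_iff_not_or]
  rw [this]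
  refine MeasurableSet.inter ?_ ?_
  · exact MeasurableSet.iInter fun i => MeasurableSet.iInter fun j => MeasurableSet.iInter fun _ =>
      measurableSet_le (measurable_pi_apply _) (measurable_pi_apply _)
  · exact MeasurableSet.iInter fun i => MeasurableSet.iInter fun j => MeasurableSet.iInter fun _ =>
      (measurableSet_eq_fun (measurable_pi_apply (σ i)) (measurable_pi_apply (σ j))).compl.union
        (MeasurableSet.const _)

lemma measurable_sortTuple (m : ℕ) : Measurable (sortTuple (m := m)) := by
  rw [measurable_pi_iff]
  intro i
  have : (fun v : Fin m → ℝ => sortTuple v i)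
      = fun v => ∑ σ : Equiv.Perm (Fin m), if Tuple.sort v = σ then v (σ i) else 0 := by
    ext v; simp [sortTuple]
  rw [this]
  exact Finset.measurable_sum _ fun σ _ =>
    Measurable.ite (measurableSet_sort_eq σ) (measurable_pi_apply _) measurable_const

lemma ae_injective (m : ℕ) : ∀ᵐ v : Fin m → ℝ, Function.Injective v := by
  have h : ∀ i j : Fin m, i ≠ j → ∀ᵐ v : Fin m → ℝ, v i ≠ v j := by
    intro i j hij
    let p : Submodule ℝ (Fin m → ℝ) :=
      LinearMap.ker ((LinearMap.proj i : (Fin m → ℝ) →ₗ[ℝ] ℝ) - LinearMap.proj j)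
    have hp : p ≠ ⊤ := by
      intro h
      have : (Pi.single i 1 : Fin m → ℝ) ∈ p := h ▸ Submodule.mem_top
      simp [p, hij] at this
    have := Measure.addHaar_submodule volume p hp
    rw [ae_iff]
    convert this using 2
    ext v
    simp [p, sub_eq_zero]
  have h' : ∀ᵐ v : Fin m → ℝ, ∀ i j : Fin m, i ≠ j → v i ≠ v j := by
    simp only [ae_all_iff]
    exact h
  filter_upwards [h'] with v hv i j hij
  by_contra hne
  exact hv i j hne hij

/-- The order statistics of `m` iid uniforms have density `m!` on the order simplex: off the null
set of ties, the cube is the disjoint union of the `m!` permuted copies of the simplex. -/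
lemma map_sort_unif (m : ℕ) :
    Measure.map sortTuple (Measure.pi fun _ : Fin m => unifLaw)
      = (Nat.factorial m : ℝ≥0∞) • volume.restrict (openSimplex m) := by
  have hcube : (Measure.pi fun _ : Fin m => unifLaw)
      = volume.restrict (Set.univ.pi fun _ : Fin m => Set.Ioo (0 : ℝ) 1) := by
    rw [volume_pi, Measure.restrict_pi_pi]
    simp only [unifLaw, restrict_Ico_eq_restrict_Ioc, ← restrict_Ioo_eq_restrict_Ioc]
  ext A hA
  have hK := measurableSet_openSimplex m
  rw [Measure.map_apply (measurable_sortTuple m) hA, hcube,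
    Measure.restrict_apply (measurable_sortTuple m hA), Measure.smul_apply,
    Measure.restrict_apply hA]
  have hperm : ∀ σ : Equiv.Perm (Fin m),
      MeasurePreserving (fun v : Fin m → ℝ => v ∘ σ) volume volume := fun σ => by
    have := volume_measurePreserving_piCongrLeft (fun _ : Fin m => ℝ) σ.symm
    convert this using 1
    ext v i
    simp [MeasurableEquiv.coe_piCongrLeft, Equiv.piCongrLeft_apply]
  have hae : (sortTuple ⁻¹' A ∩ Set.univ.pi fun _ : Fin m => Set.Ioo (0 : ℝ) 1 : Set (Fin m → ℝ))
      =ᵐ[volume] ⋃ σ : Equiv.Perm (Fin m), (fun v : Fin m → ℝ => v ∘ σ) ⁻¹' (A ∩ openSimplex m) := by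
    rw [Filter.eventuallyEq_set]
    filter_upwards [ae_injective m] with v hv
    simp only [Set.mem_inter_iff, Set.mem_preimage, Set.mem_iUnion, Set.mem_univ_pi, openSimplex,
      Set.mem_ofPred_eq]
    constructor
    · rintro ⟨h1, h2⟩
      exact ⟨Tuple.sort v, h1, (Tuple.monotone_sort v).strictMono_of_injective
        (hv.comp (Tuple.sort v).injective), fun i => h2 _⟩
    · rintro ⟨σ, h1, h2, h3⟩
      refine ⟨?_, fun i => by simpa using h3 (σ.symm i)⟩
      rwa [sortTuple, ← Tuple.comp_sort_eq_comp_iff_monotone.2 h2.monotone]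
  rw [measure_congr hae, measure_iUnion]
  · simp only [(hperm _).measure_preimage (hA.inter hK).nullMeasurableSet]
    rw [tsum_fintype, Finset.sum_const, Finset.card_univ, Fintype.card_perm, Fintype.card_fin,
      nsmul_eq_mul, smul_eq_mul]
  · intro σ τ hne
    rw [Function.onFun, Set.disjoint_left]
    rintro v ⟨-, h1, -⟩ ⟨-, h2, -⟩
    have h3 : v ∘ σ = v ∘ τ := (Tuple.comp_sort_eq_comp_iff_monotone.2 h1.monotone).trans
      (Tuple.comp_sort_eq_comp_iff_monotone.2 h2.monotone).symm
    have hinj : Function.Injective v := by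
      have := h1.injective.comp σ.symm.injective
      simpa [Function.comp_assoc] using this
    exact hne (Equiv.ext fun i => hinj (congrFun h3 i))
  · exact fun σ => (hperm σ).measurable (hA.inter hK)

/-- Iid exponentials divided by their sum have the law of the spacings of iid uniforms. Both laws
are multiples of one measure, and both are probability measures. -/
lemma map_normalize_eq_map_spacings (m : ℕ) :
    Measure.map (fun x : Fin (m + 1) → ℝ => (∑ i, x i)⁻¹ • x) (Measure.pi fun _ => expLaw)
      = Measure.map (fun v => spacings (sortTuple v)) (Measure.pi fun _ : Fin m => unifLaw) := by
  obtain ⟨c, hc⟩ := map_normalize_exp m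
  have h2 : Measure.map (fun v => spacings (sortTuple v)) (Measure.pi fun _ : Fin m => unifLaw)
      = (Nat.factorial m : ℝ≥0∞) • Measure.map spacings (volume.restrict (openSimplex m)) := by
    rw [← Measure.map_smul, ← map_sort_unif,
      Measure.map_map (measurable_spacings m) (measurable_sortTuple m)]
    rfl
  have p1 : IsProbabilityMeasure (Measure.map (fun x : Fin (m + 1) → ℝ => (∑ i, x i)⁻¹ • x)
      (Measure.pi fun _ => expLaw)) := Measure.isProbabilityMeasure_map (by fun_prop)
  have p2 : IsProbabilityMeasure (Measure.map (fun v => spacings (sortTuple v))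
      (Measure.pi fun _ : Fin m => unifLaw)) := Measure.isProbabilityMeasure_map
      ((measurable_spacings m).comp (measurable_sortTuple m)).aemeasurable
  have e1 := p1.measure_univ
  have e2 := p2.measure_univ
  rw [hc, Measure.smul_apply, smul_eq_mul] at e1
  rw [h2, Measure.smul_apply, smul_eq_mul] at e2
  rw [hc, h2, ENNReal.eq_inv_of_mul_eq_one_left e1, ENNReal.eq_inv_of_mul_eq_one_left e2]


/-! ### The Gaussian side -/

lemma half_lt {N : ℕ} (j : Fin (2 * N)) : j.val / 2 < N := by omega

/-- The coordinates of `N` points of the plane, listed in order. -/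
def interleave {N : ℕ} (w : Fin N → ℝ × ℝ) (j : Fin (2 * N)) : ℝ :=
  if j.val % 2 = 0 then (w ⟨j.val / 2, half_lt j⟩).1 else (w ⟨j.val / 2, half_lt j⟩).2

lemma measurable_interleave (N : ℕ) : Measurable (interleave (N := N)) := by
  rw [measurable_pi_iff]
  intro j
  unfold interleave
  split_ifs <;> fun_prop

@[to_additive]
lemma prod_fin_pairs {M : Type*} [CommMonoid M] {N : ℕ} (f : Fin (2 * N) → M) :
    ∏ j, f j = ∏ i : Fin N, f ⟨2 * i.val, by omega⟩ * f ⟨2 * i.val + 1, by omega⟩ := by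
  induction N with
  | zero => simp
  | succ N ih =>
    rw [Fin.prod_univ_castSucc (n := N)]
    have h0 := ih (fun j => f ⟨j.val, by omega⟩)
    simp only [Fin.val_castSucc, Fin.val_last]
    rw [← h0]
    have h := Fin.prod_univ_castSucc (n := 2 * N + 1) f
    rw [Fin.prod_univ_castSucc (n := 2 * N), mul_assoc] at h
    exact h

lemma map_interleave (N : ℕ) (μ : Measure ℝ) [SigmaFinite μ] :
    Measure.map interleave (Measure.pi fun _ : Fin N => μ.prod μ)
      = Measure.pi fun _ : Fin (2 * N) => μ := by
  symm
  refine Measure.pi_eq fun s hs => ?_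
  rw [Measure.map_apply (measurable_interleave N) (MeasurableSet.univ_pi hs)]
  have : interleave ⁻¹' (Set.univ.pi s)
      = Set.univ.pi fun i : Fin N => s ⟨2 * i.val, by omega⟩ ×ˢ s ⟨2 * i.val + 1, by omega⟩ := by
    ext w
    simp only [Set.mem_preimage, Set.mem_univ_pi, Set.mem_prod]
    constructor
    · intro h i
      have h1 := h ⟨2 * i.val, by omega⟩
      have h2 := h ⟨2 * i.val + 1, by omega⟩
      have e2 : (2 * i.val + 1) / 2 = i.val := by omega
      simp only [interleave, Nat.mul_mod_right, if_true, Nat.mul_div_cancel_left _ two_pos] at h1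
      simp only [interleave, Nat.mul_add_mod, Nat.one_mod, one_ne_zero, if_false, e2] at h2
      exact ⟨h1, h2⟩
    · intro h j
      unfold interleave
      split_ifs with hj
      · convert (h ⟨j.val / 2, half_lt j⟩).1 using 2
        ext; simp only; omega
      · convert (h ⟨j.val / 2, half_lt j⟩).2 using 2
        ext; simp only; omega
  rw [this, Measure.pi_pi, prod_fin_pairs]
  simp only [Measure.prod_prod]

/-- For weights `s = p.1` and angles `u = p.2`, the point whose `i`-th plane component is
`√(s i) (cos (2π u i), sin (2π u i))`. -/
def sphereMap {N : ℕ} (p : (Fin N → ℝ) × (Fin N → ℝ)) (j : Fin (2 * N)) : ℝ :=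
  Real.sqrt (p.1 ⟨j.val / 2, half_lt j⟩) *
    (if j.val % 2 = 0 then Real.cos (2 * Real.pi * p.2 ⟨j.val / 2, half_lt j⟩)
      else Real.sin (2 * Real.pi * p.2 ⟨j.val / 2, half_lt j⟩))

lemma measurable_sphereMap (N : ℕ) : Measurable (sphereMap (N := N)) := by
  rw [measurable_pi_iff]
  intro j
  unfold sphereMap
  split_ifs <;> fun_prop

/-- Radial normalization of `N` Box–Muller pairs only normalizes the exponential variables. -/
lemma normalize_interleave {N : ℕ} (e u : Fin N → ℝ) (he : ∀ i, 0 < e i) :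
    (Real.sqrt (∑ j, (interleave (fun i => boxMuller (e i, u i)) j) ^ 2))⁻¹ •
      interleave (fun i => boxMuller (e i, u i)) = sphereMap ((∑ i, e i)⁻¹ • e, u) := by
  have hsum : ∑ j, (interleave (fun i => boxMuller (e i, u i)) j) ^ 2 = 2 * ∑ i, e i := by
    rw [sum_fin_pairs, Finset.mul_sum]
    refine Finset.sum_congr rfl fun i _ => ?_
    have e2 : (2 * i.val + 1) / 2 = i.val := by omega
    simp only [interleave, Nat.mul_mod_right, if_true, Nat.mul_div_cancel_left _ two_pos,
      Nat.mul_add_mod, Nat.one_mod, one_ne_zero, if_false, e2, boxMuller, mul_pow]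
    have := he i
    rw [Real.sq_sqrt (by positivity), ← mul_add, Real.cos_sq_add_sin_sq, mul_one]
  rw [hsum]
  have hs : 0 ≤ ∑ i, e i := Finset.sum_nonneg fun i _ => (he i).le
  ext j
  have hej := (he ⟨j.val / 2, half_lt j⟩).le
  have hr : (Real.sqrt (2 * ∑ i, e i))⁻¹ * Real.sqrt (2 * e ⟨j.val / 2, half_lt j⟩)
      = Real.sqrt ((∑ i, e i)⁻¹ * e ⟨j.val / 2, half_lt j⟩) := by
    rw [Real.sqrt_mul zero_le_two, Real.sqrt_mul zero_le_two, Real.sqrt_mul (inv_nonneg.2 hs),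
      Real.sqrt_inv, mul_inv, mul_mul_mul_comm, inv_mul_cancel₀ (by positivity), one_mul]
  simp only [Pi.smul_apply, smul_eq_mul, interleave, sphereMap, boxMuller]
  rw [← hr]
  split_ifs <;> ring

lemma map_prod_left {α δ β : Type*} [MeasurableSpace α] [MeasurableSpace δ] [MeasurableSpace β]
    (μ : Measure α) (ν : Measure β) [SFinite μ] [SFinite ν] {f : α → δ} (hf : Measurable f) :
    (Measure.map f μ).prod ν = Measure.map (fun p => (f p.1, p.2)) (μ.prod ν) := by
  have h := Measure.map_prod_map μ ν hf measurable_id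
  rw [Measure.map_id] at h
  exact h

/-- The uniform law on the sphere in terms of normalized iid exponentials and iid uniform angles. -/
lemma uniformSphere_eq (N : ℕ) : uniformSphere N
    = Measure.map sphereMap ((Measure.map (fun e : Fin N → ℝ => (∑ i, e i)⁻¹ • e)
        (Measure.pi fun _ => expLaw)).prod (Measure.pi fun _ : Fin N => unifLaw)) := by
  have hbm := measurable_boxMuller
  have hmi := measurable_interleave N
  have hn1 : Measurable (fun e : Fin N → ℝ => (∑ i, e i)⁻¹ • e) := by fun_prop
  have hn2 : Measurable
      (fun x : Fin (2 * N) → ℝ => (Real.sqrt (∑ i, x i ^ 2))⁻¹ • x) := by fun_prop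
  have hpi : (Measure.pi fun _ : Fin N => (gaussianReal 0 1).prod (gaussianReal 0 1))
      = Measure.map (fun p : (Fin N → ℝ) × (Fin N → ℝ) => fun i => boxMuller (p.1 i, p.2 i))
        ((Measure.pi fun _ => expLaw).prod (Measure.pi fun _ => unifLaw)) := by
    have h1 := Measure.pi_map_pi (μ := fun _ : Fin N => expLaw.prod unifLaw)
      (f := fun _ => boxMuller) (fun _ => hbm.aemeasurable)
    simp only [map_boxMuller] at h1
    rw [← h1, ← (measurePreserving_arrowProdEquivProdArrow ℝ ℝ (Fin N) (fun _ => expLaw)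
      (fun _ => unifLaw)).map_eq, Measure.map_map (by fun_prop) (MeasurableEquiv.measurable _)]
    rfl
  rw [uniformSphere, ← map_interleave, hpi, Measure.map_map hmi (by fun_prop),
    Measure.map_map hn2 (by fun_prop), map_prod_left _ _ hn1,
    Measure.map_map (measurable_sphereMap N) (by fun_prop)]
  refine Measure.map_congr ?_
  have hpos : ∀ᵐ e : ℝ ∂expLaw, 0 < e := by
    rw [expLaw, ae_withDensity_iff measurable_expDensity]
    refine Filter.Eventually.of_forall fun e he => ?_
    by_contra hle
    exact he (Set.indicator_of_notMem hle _)
  have hposN : ∀ᵐ e : Fin N → ℝ ∂(Measure.pi fun _ => expLaw), ∀ i, 0 < e i :=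
    ae_all_iff.2 fun i => Measure.tendsto_eval_ae_ae.eventually hpos
  filter_upwards [Measure.quasiMeasurePreserving_fst.ae hposN] with p hp
  exact normalize_interleave p.1 p.2 hp

/-! ### Sibuya's map -/

/-- Splits the argument of Sibuya's map into the points to be sorted (first component) and the
angles (second component). -/
def coords {m : ℕ} (x : Fin (2 * (m + 1) - 1) → ℝ) : (Fin m → ℝ) × (Fin (m + 1) → ℝ) :=
  (fun i => x ⟨m + 1 + i.val, by omega⟩, fun i => x ⟨i.val, by omega⟩)

lemma measurable_coords (m : ℕ) : Measurable (coords (m := m)) := by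
  unfold coords; fun_prop

lemma map_coords (m : ℕ) :
    Measure.map coords (volume.restrict
        (Set.univ.pi fun _ : Fin (2 * (m + 1) - 1) => Set.Ico (0 : ℝ) 1))
      = (Measure.pi fun _ : Fin m => unifLaw).prod (Measure.pi fun _ : Fin (m + 1) => unifLaw) := by
  rw [volume_pi, Measure.restrict_pi_pi]
  change Measure.map coords (Measure.pi fun _ => unifLaw) = _
  let φ : Fin (m + 1) ⊕ Fin m ≃ Fin (2 * (m + 1) - 1) :=
    finSumFinEquiv.trans (finCongr (by omega))
  have h1 := measurePreserving_piCongrLeft (fun _ => unifLaw) φ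
  have h2 := measurePreserving_sumPiEquivProdPi_symm
    (fun _ : Fin (m + 1) ⊕ Fin m => unifLaw)
  rw [← h1.map_eq, ← h2.map_eq, Measure.map_map h1.measurable h2.measurable,
    Measure.map_map (measurable_coords m) (h1.measurable.comp h2.measurable)]
  conv_rhs => rw [← Measure.prod_swap]
  congr 1
  funext p
  refine Prod.ext (funext fun i => ?_) (funext fun i => ?_)
  · have : (⟨m + 1 + i.val, by omega⟩ : Fin (2 * (m + 1) - 1)) = φ (Sum.inr i) := by
      ext; simp [φ]
    simp only [coords, Function.comp_apply, this, MeasurableEquiv.coe_piCongrLeft,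
      Equiv.piCongrLeft_apply_apply]
    rfl
  · have : (⟨i.val, by omega⟩ : Fin (2 * (m + 1) - 1)) = φ (Sum.inl i) := by
      ext; simp [φ]
    simp only [coords, Function.comp_apply, this, MeasurableEquiv.coe_piCongrLeft,
      Equiv.piCongrLeft_apply_apply]
    rfl

/-- Positive-index cumulative values: the sorted points followed by `1`. -/
lemma sibuyaYs_succ {m : ℕ} (x : Fin (2 * (m + 1) - 1) → ℝ) (i : Fin (m + 1)) :
    sibuyaYs (m + 1) x (i.val + 1)
      = (Fin.snoc (sortTuple (coords x).1) 1 : Fin (m + 1) → ℝ) i := by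
  cases i using Fin.lastCases with
  | last => simp [sibuyaYs]
  | cast i =>
    have htail : (fun i : Fin m => if h : m + 1 + i.val < 2 * (m + 1) - 1
        then x ⟨m + 1 + i.val, h⟩ else 0) = (coords x).1 := by
      ext k
      rw [dif_pos (by omega)]
      rfl
    have h1 : ¬ (m + 1 ≤ i.val + 1) := by omega
    have h2 : i.val + 1 - 1 < m + 1 - 1 := by omega
    rw [Fin.snoc_castSucc]
    simp only [sibuyaYs, Fin.val_castSucc, Nat.succ_ne_zero, if_false, h1, h2, dif_pos]
    change (fun i : Fin m => if h : m + 1 + i.val < 2 * (m + 1) - 1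
        then x ⟨m + 1 + i.val, h⟩ else 0) (Tuple.sort (fun i : Fin m =>
          if h : m + 1 + i.val < 2 * (m + 1) - 1 then x ⟨m + 1 + i.val, h⟩ else 0) i) = _
    rw [htail]
    rfl

lemma sibuya_eq {m : ℕ} (x : Fin (2 * (m + 1) - 1) → ℝ) :
    sibuya (m + 1) x = sphereMap (spacings (sortTuple (coords x).1), (coords x).2) := by
  ext j
  have hj := half_lt j
  have hgap : sibuyaYs (m + 1) x (j.val / 2 + 1) - sibuyaYs (m + 1) x (j.val / 2)
      = spacings (sortTuple (coords x).1) ⟨j.val / 2, hj⟩ := by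
    suffices h : ∀ i : Fin (m + 1), sibuyaYs (m + 1) x (i.val + 1) - sibuyaYs (m + 1) x i.val
        = spacings (sortTuple (coords x).1) i from h ⟨j.val / 2, hj⟩
    intro i
    rw [sibuyaYs_succ, spacings]
    cases i using Fin.cases with
    | zero => rw [gaps_zero]; simp [sibuyaYs]
    | succ i =>
      rw [gaps_succ, Fin.val_succ, ← Fin.val_castSucc, sibuyaYs_succ]
  have hang : j.val / 2 < 2 * (m + 1) - 1 := by omega
  simp only [sibuya, sphereMap, hgap, hang, dif_pos]
  rfl

/-- Sibuya's theorem: the pushforward of Lebesgue measure on `[0,1)^(2N−1)` under `S` is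
the uniform probability measure on `S^(2N−1)`. -/
theorem sibuya_map_uniform (N : ℕ) (hN : 1 ≤ N) :
    Measure.map (sibuya N)
        (volume.restrict (Set.univ.pi fun _ : Fin (2 * N - 1) => Set.Ico (0 : ℝ) 1))
      = uniformSphere N := by
  obtain ⟨m, rfl⟩ : ∃ m, N = m + 1 := ⟨N - 1, by omega⟩
  have hmeas : Measurable fun v : Fin m → ℝ => spacings (sortTuple v) :=
    (measurable_spacings m).comp (measurable_sortTuple m)
  have hmeas_pair : Measurable fun p : (Fin m → ℝ) × (Fin (m + 1) → ℝ) =>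
      (spacings (sortTuple p.1), p.2) := (hmeas.comp measurable_fst).prodMk measurable_snd
  rw [uniformSphere_eq, map_normalize_eq_map_spacings, map_prod_left _ _ hmeas, ← map_coords,
    Measure.map_map hmeas_pair (measurable_coords m),
    Measure.map_map (measurable_sphereMap _) (hmeas_pair.comp (measurable_coords m))]
  congr 1
  exact funext sibuya_eq
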